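/- Let H be a finite abelian group of odd order with K(H) = K*(H) and Σ_{d | exp(H)} 1/d < 2. Then K(C_2 ⊕ H) = K*(C_2 ⊕ H). -/

import Mathlib

open Multiset Pointwise

/-- Cross number of a sequence (multiset) over an additive group. -/
noncomputable def crossNum {G : Type*} [AddCommGroup G] (S : Multiset G) : ℚ :=
  (S.map (fun g => (1 : ℚ) / (addOrderOf g : ℚ))).sum

/-- A sequence is zero-sum free if no non-empty subsequence sums to zero. -/
def IsZeroSumFree {G : Type*} [AddCommGroup G] (S : Multiset G) : Prop :=
  ∀ T : Multiset G, T ≤ S → T ≠ 0 → T.sum ≠ (0 : G)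

/-- A minimal zero-sum sequence: non-trivial, sum zero, no proper non-trivial
zero-sum subsequence. -/
def IsMinZeroSum {G : Type*} [AddCommGroup G] (S : Multiset G) : Prop :=
  S ≠ 0 ∧ S.sum = 0 ∧ ∀ T : Multiset G, T < S → T ≠ 0 → T.sum ≠ (0 : G)

/-- `wSet G` : set of cross numbers of non-trivial zero-sum free sequences over `G`. -/
def wSet (G : Type*) [AddCommGroup G] : Set ℚ :=
  { k | ∃ S : Multiset G, S ≠ 0 ∧ IsZeroSumFree S ∧ crossNum S = k }

/-- `WSet G` : set of cross numbers of minimal zero-sum sequences over `G`. -/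
def WSet (G : Type*) [AddCommGroup G] : Set ℚ :=
  { k | ∃ S : Multiset G, IsMinZeroSum S ∧ crossNum S = k }

/-
Write `n = exp H`. Appending `g = (g_i)_i` to the sequence that repeats each `g_i` in its own factor
`ord g_i - 1` times gives a minimal zero-sum sequence over `∏ G_i`, of cross number
`1 / ord g + ∑ (ord g_i - 1) / ord g_i`; this is the lower bound `K* ≤ K`.

For the upper bound `K(C₂ ⊕ H) ≤ K(H) + 1/2 - 1/(2n)`, replace two terms of the same even order by
their sum: minimality is preserved, and the order at least halves, so the cross number does not
drop. Hence the terms of even order may be taken of pairwise distinct orders. If `(1, 0)` occurs,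
deleting it and projecting to `H` leaves a minimal zero-sum sequence. Otherwise the terms of even
order have total cross number at most `(σ(n)/n - 1) / 2 < 1/2`, and merging all of them into one
element of `H` shows that the others have cross number at most `K(H) - 1/n`.
-/

-- An order or exponent `0` stands for `∞`, so the junk value `1 / 0 = 0` is the intended one.
theorem one_div_le_one_div_of_dvd {m n : ℕ} (h : m ∣ n) : (1 : ℚ) / n ≤ 1 / m := by
  rcases n.eq_zero_or_pos with rfl | hn
  · simp
  · exact one_div_le_one_div_of_le (by exact_mod_cast Nat.pos_of_dvd_of_pos h hn)
      (by exact_mod_cast Nat.le_of_dvd hn h)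

theorem exists_le_map_eq_of_le_map {α β : Type*} {f : α → β} {S : Multiset α} {T : Multiset β}
    (h : T ≤ S.map f) : ∃ S' ≤ S, S'.map f = T := by
  induction S using Multiset.induction_on generalizing T with
  | empty => exact ⟨0, le_rfl, (Multiset.le_zero.mp h).symm⟩
  | cons a S ih =>
    rw [Multiset.map_cons] at h
    by_cases ha : f a ∈ T
    · obtain ⟨T, rfl⟩ := Multiset.exists_cons_of_mem ha
      obtain ⟨S', hS', rfl⟩ := ih ((Multiset.cons_le_cons_iff _).mp h)
      exact ⟨a ::ₘ S', Multiset.cons_le_cons a hS', Multiset.map_cons f a S'⟩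
    · obtain ⟨S', hS', rfl⟩ := ih ((Multiset.le_cons_of_notMem ha).mp h)
      exact ⟨S', hS'.trans (Multiset.le_cons_self S a), rfl⟩

theorem exists_eq_cons_cons_of_not_nodup_map {α β : Type*} {f : α → β} {S : Multiset α}
    (h : ¬ (S.map f).Nodup) : ∃ a b R, S = a ::ₘ b ::ₘ R ∧ f a = f b := by
  induction S using Multiset.induction_on with
  | empty => simp at h
  | cons a S ih =>
    rw [Multiset.map_cons, Multiset.nodup_cons, not_and_or, not_not] at h
    rcases h with ha | hS
    · obtain ⟨b, hb, hab⟩ := Multiset.mem_map.mp ha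
      obtain ⟨R, rfl⟩ := Multiset.exists_cons_of_mem hb
      exact ⟨a, b, R, rfl, hab.symm⟩
    · obtain ⟨b, c, R, rfl, hbc⟩ := ih hS
      exact ⟨b, c, a ::ₘ R, by rw [Multiset.cons_swap a b, Multiset.cons_swap a c], hbc⟩

theorem sum_filter_ne_zero {G : Type*} [AddCommMonoid G] [DecidableEq G] (S : Multiset G) :
    (S.filter (· ≠ 0)).sum = S.sum := by
  induction S using Multiset.induction_on with
  | empty => simp
  | cons g S ih =>
    by_cases hg : g = 0
    · simpa [hg] using ih
    · simp [hg, ih]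

theorem fst_sum_eq_zero {G H : Type*} [AddCommMonoid G] [AddCommMonoid H] {S : Multiset (G × H)}
    (hS : ∀ x ∈ S, x.1 = 0) : S.sum.1 = 0 := by
  rw [Multiset.fst_sum]
  exact Multiset.sum_eq_zero (by simpa using hS)

theorem one_div_addOrderOf_le_map {G H : Type*} [AddMonoid G] [AddMonoid H] (f : G →+ H)
    (g : G) : (1 : ℚ) / addOrderOf g ≤ 1 / addOrderOf (f g) :=
  one_div_le_one_div_of_dvd (addOrderOf_map_dvd f g)

theorem one_div_exponent_le {G : Type*} [AddMonoid G] (g : G) :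
    (1 : ℚ) / AddMonoid.exponent G ≤ 1 / addOrderOf g :=
  one_div_le_one_div_of_dvd (AddMonoid.addOrder_dvd_exponent g)

theorem addOrderOf_of_fst_eq_zero {G H : Type*} [AddMonoid G] [AddMonoid H] {x : G × H}
    (hx : x.1 = 0) : addOrderOf x = addOrderOf x.2 := by
  rw [Prod.addOrderOf, hx, addOrderOf_zero, Nat.lcm_one_left]

theorem addOrderOf_one_eq_exponent (R : Type*) [NonAssocSemiring R] :
    addOrderOf (1 : R) = AddMonoid.exponent R := by
  refine Nat.dvd_antisymm (AddMonoid.addOrder_dvd_exponent 1)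
    (AddMonoid.exponent_dvd_of_forall_nsmul_eq_zero fun r => ?_)
  rw [← one_mul r, ← smul_mul_assoc, addOrderOf_nsmul_eq_zero, zero_mul]

theorem zmod_two_eq_zero_or_eq_one (a : ZMod 2) : a = 0 ∨ a = 1 := by
  revert a
  decide

section CrossNumber

variable {G H : Type*} [AddCommGroup G] [AddCommGroup H]

theorem crossNum_cons (g : G) (S : Multiset G) :
    crossNum (g ::ₘ S) = 1 / (addOrderOf g : ℚ) + crossNum S := by
  simp [crossNum]

theorem crossNum_add (S T : Multiset G) : crossNum (S + T) = crossNum S + crossNum T := by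
  simp [crossNum]

theorem crossNum_sum {ι : Type*} (s : Finset ι) (S : ι → Multiset G) :
    crossNum (∑ i ∈ s, S i) = ∑ i ∈ s, crossNum (S i) := by
  classical
  induction s using Finset.induction_on with
  | empty => simp [crossNum]
  | insert i s hi ih => rw [Finset.sum_insert hi, Finset.sum_insert hi, crossNum_add, ih]

theorem crossNum_map_of_injective {f : G →+ H} (hf : Function.Injective f) (S : Multiset G) :
    crossNum (S.map f) = crossNum S := by
  simp [crossNum, addOrderOf_injective f hf]

theorem crossNum_le_crossNum_map (f : G →+ H) (S : Multiset G) :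
    crossNum S ≤ crossNum (S.map f) := by
  rw [crossNum, crossNum, Multiset.map_map]
  exact Multiset.sum_map_le_sum_map _ _ fun g _ => one_div_addOrderOf_le_map f g

theorem crossNum_replicate_addOrderOf_sub_one (g : G) :
    crossNum (Multiset.replicate (addOrderOf g - 1) g)
      = ((addOrderOf g : ℚ) - 1) / addOrderOf g := by
  rcases (addOrderOf g).eq_zero_or_pos with h | h
  · simp [crossNum, h]
  · simp [crossNum, Nat.cast_sub (Nat.one_le_of_lt h), div_eq_mul_inv]

theorem isZeroSumFree_replicate_addOrderOf_sub_one (g : G) :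
    IsZeroSumFree (Multiset.replicate (addOrderOf g - 1) g) := by
  intro T hT hT0 hsum
  obtain ⟨k, hk, rfl⟩ := Multiset.le_replicate_iff.mp hT
  have hk0 : k ≠ 0 := by rintro rfl; exact hT0 rfl
  have hdvd : addOrderOf g ∣ k :=
    addOrderOf_dvd_of_nsmul_eq_zero (by rwa [Multiset.sum_replicate] at hsum)
  have := Nat.le_of_dvd (Nat.pos_of_ne_zero hk0) hdvd
  omega

theorem IsZeroSumFree.zero_notMem {S : Multiset G} (hS : IsZeroSumFree S) : 0 ∉ S := fun h =>
  hS {0} (Multiset.singleton_le.mpr h) (Multiset.singleton_ne_zero 0) (Multiset.sum_singleton 0)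

theorem IsZeroSumFree.isMinZeroSum_cons {S : Multiset G} (hS : IsZeroSumFree S) {g : G}
    (hg : g + S.sum = 0) : IsMinZeroSum (g ::ₘ S) := by
  refine ⟨Multiset.cons_ne_zero, by rwa [Multiset.sum_cons], fun T hT hT0 hsum => ?_⟩
  by_cases hgT : g ∈ T
  · obtain ⟨T, rfl⟩ := Multiset.exists_cons_of_mem hgT
    have hlt : T < S := (Multiset.cons_lt_cons_iff).mp hT
    obtain ⟨V, rfl⟩ := Multiset.le_iff_exists_add.mp hlt.le
    have hV : V.sum = 0 := by
      rwa [Multiset.sum_add, ← add_assoc, ← Multiset.sum_cons g T, hsum, zero_add] at hg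
    exact hS V (Multiset.le_add_left V T) (by rintro rfl; simp at hlt) hV
  · exact hS T ((Multiset.le_cons_of_notMem hgT).mp hT.le) hT0 hsum

theorem IsMinZeroSum.sum_cons_of_add {X S : Multiset G} (h : IsMinZeroSum (X + S)) (hX : X ≠ 0) :
    IsMinZeroSum (X.sum ::ₘ S) := by
  refine ⟨Multiset.cons_ne_zero, by simpa using h.2.1, fun T hT hT0 hsum => ?_⟩
  by_cases hXT : X.sum ∈ T
  · obtain ⟨T, rfl⟩ := Multiset.exists_cons_of_mem hXT
    have hlt : T < S := (Multiset.cons_lt_cons_iff).mp hT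
    exact h.2.2 (X + T) (by gcongr) (by simp [hX]) (by simpa using hsum)
  · have hle : T ≤ S := (Multiset.le_cons_of_notMem hXT).mp hT.le
    exact h.2.2 T (hle.trans_lt (lt_add_of_pos_left S (pos_iff_ne_zero.mpr hX))) hT0 hsum

theorem IsMinZeroSum.of_map {f : G →+ H} (hf : Function.Injective f) {S : Multiset G}
    (h : IsMinZeroSum (S.map f)) : IsMinZeroSum S := by
  refine ⟨by simpa using h.1, hf ?_, fun T hT hT0 hsum => ?_⟩
  · rw [map_multiset_sum, h.2.1, _root_.map_zero]
  · exact h.2.2 (T.map f) (Multiset.map_lt_map hT) (by simpa using hT0)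
      (by rw [← map_multiset_sum, hsum, _root_.map_zero])

theorem mem_WSet_of_addEquiv (e : G ≃+ H) {k : ℚ} (hk : k ∈ WSet G) : k ∈ WSet H := by
  obtain ⟨S, hS, rfl⟩ := hk
  refine ⟨S.map e, IsMinZeroSum.of_map (f := e.symm.toAddMonoidHom) e.symm.injective ?_,
    crossNum_map_of_injective (f := e.toAddMonoidHom) e.injective S⟩
  simpa using hS

/-- Each subsequence of `S` whose image sums to zero can be completed by `g`, if necessary, to a
zero-sum subsequence of `g ::ₘ S`. -/
theorem IsMinZeroSum.map_of_cons {f : G →+ H} {g : G} {S : Multiset G}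
    (h : IsMinZeroSum (g ::ₘ S)) (hS : S ≠ 0) (hg : f g = 0)
    (hker : ∀ x, f x = 0 → x = 0 ∨ g + x = 0) : IsMinZeroSum (S.map f) := by
  obtain ⟨-, hsum, hmin⟩ := h
  refine ⟨by simpa using hS, ?_, fun T hT hT0 hTsum => ?_⟩
  · simpa [hg, map_multiset_sum] using congrArg f hsum
  obtain ⟨T, hle, rfl⟩ := exists_le_map_eq_of_le_map hT.le
  have hlt : T < S := hle.lt_of_ne (by rintro rfl; exact hT.false)
  rw [← map_multiset_sum] at hTsum
  rcases hker _ hTsum with h0 | h0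
  · exact hmin T (hlt.trans (Multiset.lt_cons_self S g)) (by simpa using hT0) h0
  · exact hmin (g ::ₘ T) ((Multiset.cons_lt_cons_iff).mpr hlt) Multiset.cons_ne_zero
      (by rwa [Multiset.sum_cons])

end CrossNumber

section Pi

variable {ι : Type*} [Fintype ι] [DecidableEq ι] {G : ι → Type*} [∀ i, AddCommGroup (G i)]

theorem sum_sum_map_single (A : ∀ i, Multiset (G i)) :
    (∑ i, (A i).map (Pi.single i)).sum = fun i => (A i).sum := by
  rw [← Multiset.coe_sumAddMonoidHom, map_sum]
  simp only [Multiset.coe_sumAddMonoidHom]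
  rw [← Finset.univ_sum_single fun i => (A i).sum]
  exact Finset.sum_congr rfl fun i _ =>
    (map_multiset_sum (AddMonoidHom.single G i) (A i)).symm

theorem crossNum_sum_map_single (A : ∀ i, Multiset (G i)) :
    crossNum (∑ i, (A i).map (Pi.single i)) = ∑ i, crossNum (A i) := by
  rw [crossNum_sum]
  exact Finset.sum_congr rfl fun i _ =>
    crossNum_map_of_injective (f := AddMonoidHom.single G i) (Pi.single_injective i) (A i)

theorem filter_map_eval_sum_map_single [∀ i, DecidableEq (G i)] (A : ∀ i, Multiset (G i))
    (i : ι) :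
    ((∑ j, (A j).map (Pi.single j)).map fun x => x i).filter (· ≠ 0)
      = (A i).filter (· ≠ 0) := by
  have hrest : ∀ x ∈ ∑ j ∈ Finset.univ.erase i, (A j).map (Pi.single j), x i = 0 := by
    intro x hx
    obtain ⟨j, hj, hx⟩ := Multiset.mem_sum.mp hx
    obtain ⟨a, -, rfl⟩ := Multiset.mem_map.mp hx
    exact Pi.single_eq_of_ne (Finset.ne_of_mem_erase hj).symm a
  rw [← Finset.add_sum_erase _ _ (Finset.mem_univ i), Multiset.map_add, Multiset.filter_add,
    Multiset.filter_eq_nil (s := Multiset.map _ (∑ j ∈ _, _)) |>.mpr, add_zero, Multiset.map_map]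
  · simp
  · intro a ha
    obtain ⟨x, hx, rfl⟩ := Multiset.mem_map.mp ha
    exact not_not.mpr (hrest x hx)

theorem IsZeroSumFree.sum_map_single {A : ∀ i, Multiset (G i)} (hA : ∀ i, IsZeroSumFree (A i)) :
    IsZeroSumFree (∑ i, (A i).map (Pi.single i)) := by
  classical
  intro T hT hT0 hsum
  have hle (i : ι) : (T.map fun x => x i).filter (· ≠ 0) ≤ A i :=
    calc (T.map fun x => x i).filter (· ≠ 0)
        ≤ ((∑ j, (A j).map (Pi.single j)).map fun x => x i).filter (· ≠ 0) :=
          Multiset.filter_le_filter _ (Multiset.map_le_map hT)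
      _ = (A i).filter (· ≠ 0) := filter_map_eval_sum_map_single A i
      _ ≤ A i := Multiset.filter_le _ _
  have hzero (i : ι) (x : ∀ i, G i) (hx : x ∈ T) : x i = 0 := by
    by_contra hxi
    refine hA i _ (hle i) ?_ ?_
    · have hmem : x i ∈ (T.map fun y => y i).filter (· ≠ 0) :=
        Multiset.mem_filter.mpr ⟨Multiset.mem_map_of_mem (fun y => y i) hx, hxi⟩
      exact fun h => Multiset.notMem_zero _ (h ▸ hmem)
    · rw [sum_filter_ne_zero]
      exact (map_multiset_sum (Pi.evalAddMonoidHom G i) T).symm.trans (congrFun hsum i)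
  obtain ⟨x, hx⟩ := Multiset.exists_mem_of_ne_zero hT0
  obtain ⟨i, -, hxi⟩ := Multiset.mem_sum.mp (Multiset.mem_of_le hT hx)
  obtain ⟨a, ha, rfl⟩ := Multiset.mem_map.mp hxi
  have ha0 : a = 0 := by simpa using hzero i _ hx
  exact (hA i).zero_notMem (ha0 ▸ ha)

end Pi

theorem one_div_addOrderOf_add_sum_mem_WSet {ι : Type*} [Fintype ι] {G : ι → Type*}
    [∀ i, AddCommGroup (G i)] (g : ∀ i, G i) (hg : ∀ i, IsOfFinAddOrder (g i)) :
    1 / (addOrderOf g : ℚ) + ∑ i, ((addOrderOf (g i) : ℚ) - 1) / addOrderOf (g i)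
      ∈ WSet (∀ i, G i) := by
  classical
  let A : ∀ i, Multiset (G i) := fun i => Multiset.replicate (addOrderOf (g i) - 1) (g i)
  have hsum : g + (∑ i, (A i).map (Pi.single i)).sum = 0 := by
    rw [sum_sum_map_single]
    funext i
    rw [Pi.add_apply, Multiset.sum_replicate, ← succ_nsmul',
      Nat.sub_add_cancel (hg i).addOrderOf_pos, addOrderOf_nsmul_eq_zero, Pi.zero_apply]
  refine ⟨_, (IsZeroSumFree.sum_map_single fun i =>
    isZeroSumFree_replicate_addOrderOf_sub_one (g i)).isMinZeroSum_cons hsum, ?_⟩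
  rw [crossNum_cons, crossNum_sum_map_single]
  simp only [crossNum_replicate_addOrderOf_sub_one]

theorem one_div_exponent_add_sum_mem_WSet {G ι : Type*} [AddCommGroup G] [Fintype ι] {q : ι → ℕ}
    (hq : ∀ i, q i ≠ 0) (e : G ≃+ ∀ i, ZMod (q i)) :
    1 / (AddMonoid.exponent G : ℚ) + ∑ i, ((q i : ℚ) - 1) / q i ∈ WSet G := by
  classical
  have hfin (i : ι) : IsOfFinAddOrder (1 : ZMod (q i)) := by
    rw [← addOrderOf_pos_iff, ZMod.addOrderOf_one]
    exact Nat.pos_of_ne_zero (hq i)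
  have h := mem_WSet_of_addEquiv e.symm
    (one_div_addOrderOf_add_sum_mem_WSet (fun i => (1 : ZMod (q i))) hfin)
  have hexp : addOrderOf (fun i => (1 : ZMod (q i))) = AddMonoid.exponent G :=
    (addOrderOf_one_eq_exponent _).trans (AddMonoid.exponent_eq_of_addEquiv e).symm
  simpa only [hexp, ZMod.addOrderOf_one] using h

/-- `C₂ ⊕ H` as a product of cyclic groups, with the factor `C₂` at the index `none`. -/
def zmodTwoProdEquivPi {H : Type*} [AddCommGroup H] {ι : Type*} {q : ι → ℕ}
    (e : H ≃+ ∀ i, ZMod (q i)) : ZMod 2 × H ≃+ ∀ o : Option ι, ZMod (o.elim 2 q) :=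
  (AddEquiv.prodCongr (.refl (ZMod 2)) e).trans
    (RingEquiv.piOptionEquivProd (R := fun o : Option ι => ZMod (o.elim 2 q))).symm.toAddEquiv

section Prod

variable {G H : Type*} [AddCommGroup G] [AddCommGroup H]

theorem crossNum_mem_WSet_of_fst_eq_zero {S : Multiset (G × H)} (hS : IsMinZeroSum S)
    (h0 : ∀ x ∈ S, x.1 = 0) : crossNum S ∈ WSet H := by
  have hinr : Function.Injective (AddMonoidHom.inr G H) := Prod.mk_right_injective 0
  have hmap : (S.map Prod.snd).map (AddMonoidHom.inr G H) = S := by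
    rw [Multiset.map_map]
    conv_rhs => rw [← Multiset.map_id S]
    exact Multiset.map_congr rfl fun x hx => Prod.ext (h0 x hx).symm rfl
  refine ⟨S.map Prod.snd, .of_map hinr (by rwa [hmap]), ?_⟩
  rw [← crossNum_map_of_injective hinr, hmap]

theorem one_div_exponent_add_crossNum_le {E O : Multiset (G × H)} {K : ℚ}
    (hK : K ∈ upperBounds (WSet H)) (hmin : IsMinZeroSum (E + O)) (hE : E ≠ 0)
    (hO : ∀ x ∈ O, x.1 = 0) : 1 / (AddMonoid.exponent H : ℚ) + crossNum O ≤ K := by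
  have hEsum : E.sum.1 = 0 := by
    simpa [fst_sum_eq_zero hO] using congrArg Prod.fst hmin.2.1
  calc 1 / (AddMonoid.exponent H : ℚ) + crossNum O
      ≤ 1 / (addOrderOf E.sum : ℚ) + crossNum O := by
        rw [addOrderOf_of_fst_eq_zero hEsum]
        gcongr ?_ + _
        exact one_div_exponent_le E.sum.2
    _ = crossNum (E.sum ::ₘ O) := (crossNum_cons _ _).symm
    _ ≤ K := hK (crossNum_mem_WSet_of_fst_eq_zero (hmin.sum_cons_of_add hE)
        (Multiset.forall_mem_cons.mpr ⟨hEsum, hO⟩))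

end Prod

section ZModTwo

variable {H : Type*} [AddCommGroup H]

theorem addOrderOf_of_fst_eq_one (hodd : Odd (AddMonoid.exponent H)) {x : ZMod 2 × H}
    (hx : x.1 = 1) : addOrderOf x = 2 * addOrderOf x.2 := by
  rw [Prod.addOrderOf, hx, ZMod.addOrderOf_one]
  exact (Nat.coprime_two_left.mpr
    (hodd.of_dvd_nat (AddMonoid.addOrder_dvd_exponent x.2))).lcm_eq_mul

theorem one_div_addOrderOf_add_le (hodd : Odd (AddMonoid.exponent H)) {a b : ZMod 2 × H}
    (ha : a.1 = 1) (hb : b.1 = 1) (hab : addOrderOf a = addOrderOf b) :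
    (1 : ℚ) / addOrderOf a + 1 / addOrderOf b ≤ 1 / addOrderOf (a + b) := by
  have hfst : (a + b).1 = 0 := by rw [Prod.fst_add, ha, hb, CharTwo.add_self_eq_zero]
  have hab' : addOrderOf b.2 = addOrderOf a.2 := by
    rw [addOrderOf_of_fst_eq_one hodd ha, addOrderOf_of_fst_eq_one hodd hb] at hab
    omega
  have hdvd : addOrderOf (a + b).2 ∣ addOrderOf a.2 := by
    rw [Prod.snd_add, addOrderOf_dvd_iff_nsmul_eq_zero, smul_add, addOrderOf_nsmul_eq_zero, ← hab',
      addOrderOf_nsmul_eq_zero, add_zero]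
  calc (1 : ℚ) / addOrderOf a + 1 / addOrderOf b
      = 1 / addOrderOf a.2 := by
        rw [← hab, addOrderOf_of_fst_eq_one hodd ha]
        push_cast
        field_simp
        norm_num
    _ ≤ 1 / addOrderOf (a + b) := by
        rw [addOrderOf_of_fst_eq_zero hfst]
        exact one_div_le_one_div_of_dvd hdvd

theorem exists_isMinZeroSum_card_lt (hodd : Odd (AddMonoid.exponent H))
    {S : Multiset (ZMod 2 × H)} (hS : IsMinZeroSum S)
    (hdup : ¬ ((S.filter fun x => x.1 = 1).map addOrderOf).Nodup) :
    ∃ S' : Multiset (ZMod 2 × H),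
      IsMinZeroSum S' ∧ crossNum S ≤ crossNum S' ∧ S'.card < S.card := by
  obtain ⟨a, b, R, hR, hab⟩ := exists_eq_cons_cons_of_not_nodup_map hdup
  have hfst (x : ZMod 2 × H) (hx : x ∈ a ::ₘ b ::ₘ R) : x.1 = 1 := by
    rw [← hR] at hx
    exact (Multiset.mem_filter.mp hx).2
  obtain ⟨T, rfl⟩ : ∃ T, S = {a, b} + T := by
    refine Multiset.le_iff_exists_add.mp (le_trans ?_ (Multiset.filter_le (fun x => x.1 = 1) S))
    rw [hR]
    exact Multiset.cons_le_cons a (Multiset.cons_le_cons b (Multiset.zero_le R))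
  refine ⟨(a + b) ::ₘ T, by simpa using hS.sum_cons_of_add (by simp), ?_, by simp⟩
  rw [crossNum_add, crossNum_cons]
  gcongr
  simpa [crossNum] using
    one_div_addOrderOf_add_le hodd (hfst a (by simp)) (hfst b (by simp)) hab

theorem exists_isMinZeroSum_nodup_map_addOrderOf (hodd : Odd (AddMonoid.exponent H))
    {S : Multiset (ZMod 2 × H)} (hS : IsMinZeroSum S) :
    ∃ S' : Multiset (ZMod 2 × H),
      IsMinZeroSum S' ∧ crossNum S ≤ crossNum S' ∧
      ((S'.filter fun x => x.1 = 1).map addOrderOf).Nodup := by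
  induction hm : S.card using Nat.strong_induction_on generalizing S with
  | _ m ih =>
    by_cases hnodup : ((S.filter fun x => x.1 = 1).map addOrderOf).Nodup
    · exact ⟨S, hS, le_rfl, hnodup⟩
    obtain ⟨T, hT, hST, hcard⟩ := exists_isMinZeroSum_card_lt hodd hS hnodup
    obtain ⟨S', hS', hTS', h⟩ := ih _ (hm ▸ hcard) hT rfl
    exact ⟨S', hS', hST.trans hTS', h⟩

theorem crossNum_le_of_nodup_map_addOrderOf (hodd : Odd (AddMonoid.exponent H))
    {E : Multiset (ZMod 2 × H)} (hE : ∀ x ∈ E, x.1 = 1) (hone : (1, 0) ∉ E)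
    (hnodup : (E.map addOrderOf).Nodup) :
    crossNum E ≤ (∑ d ∈ (AddMonoid.exponent H).divisors, (1 : ℚ) / d - 1) / 2 := by
  set n := AddMonoid.exponent H
  have hn : n ≠ 0 := hodd.pos.ne'
  let D : Finset ℕ := ⟨E.map addOrderOf, hnodup⟩
  have hD : D ⊆ (n.divisors.erase 1).image (2 * · : ℕ → ℕ) := by
    intro d hd
    obtain ⟨x, hx, rfl⟩ := Multiset.mem_map.mp (Finset.mem_mk.mp hd)
    refine Finset.mem_image.mpr
      ⟨addOrderOf x.2, ?_, (addOrderOf_of_fst_eq_one hodd (hE x hx)).symm⟩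
    refine Finset.mem_erase.mpr
      ⟨fun h => hone ?_, Nat.mem_divisors.mpr ⟨AddMonoid.addOrder_dvd_exponent _, hn⟩⟩
    have hx' : x = (1, 0) := Prod.ext (hE x hx) (AddMonoid.addOrderOf_eq_one_iff.mp h)
    rwa [← hx']
  calc crossNum E = ∑ d ∈ D, (1 : ℚ) / d := by
        simp [D, crossNum, Finset.sum, Multiset.map_map]
    _ ≤ ∑ d ∈ (n.divisors.erase 1).image (2 * · : ℕ → ℕ), (1 : ℚ) / d :=
        Finset.sum_le_sum_of_subset_of_nonneg hD fun _ _ _ => by positivity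
    _ = (∑ d ∈ n.divisors.erase 1, (1 : ℚ) / d) / 2 := by
        rw [Finset.sum_image fun a _ b _ h => Nat.eq_of_mul_eq_mul_left two_pos h,
          Finset.sum_div]
        exact Finset.sum_congr rfl fun d _ => by push_cast; rw [div_div, mul_comm]
    _ = (∑ d ∈ n.divisors, (1 : ℚ) / d - 1) / 2 := by
        rw [Finset.sum_erase_eq_sub (Nat.one_mem_divisors.mpr hn), Nat.cast_one, div_one]

theorem crossNum_le_of_mem_one_zero (hodd : Odd (AddMonoid.exponent H))
    {S : Multiset (ZMod 2 × H)} {K : ℚ}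
    (hK : K ∈ upperBounds (WSet H)) (hS : IsMinZeroSum S) (hone : (1, 0) ∈ S) :
    crossNum S ≤ K + 1 / 2 - 1 / (2 * AddMonoid.exponent H) := by
  obtain ⟨R, rfl⟩ := Multiset.exists_cons_of_mem hone
  have hRsum : R.sum.1 ≠ 0 := by
    intro h
    simpa [h] using congrArg Prod.fst hS.2.1
  obtain ⟨x, hxR, hx⟩ : ∃ x ∈ R, x.1 = 1 := by
    by_contra! hne
    exact hRsum (fst_sum_eq_zero fun x hx =>
      (zmod_two_eq_zero_or_eq_one x.1).resolve_right (hne x hx))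
  have hmap : IsMinZeroSum (R.map (AddMonoidHom.snd (ZMod 2) H)) := by
    refine hS.map_of_cons (by rintro rfl; exact Multiset.notMem_zero x hxR) rfl fun y hy => ?_
    have hy : y.2 = 0 := hy
    rcases zmod_two_eq_zero_or_eq_one y.1 with h | h
    · exact .inl (Prod.ext h hy)
    · refine .inr (Prod.ext ?_ (by simp [hy]))
      exact (congrArg (1 + ·) h).trans (CharTwo.add_self_eq_zero 1)
  obtain ⟨R, rfl⟩ := Multiset.exists_cons_of_mem hxR
  have hbound : 1 / (addOrderOf x.2 : ℚ) + crossNum R ≤ K :=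
    calc 1 / (addOrderOf x.2 : ℚ) + crossNum R
        ≤ 1 / (addOrderOf x.2 : ℚ) + crossNum (R.map (AddMonoidHom.snd (ZMod 2) H)) := by
          gcongr
          exact crossNum_le_crossNum_map _ R
      _ = crossNum ((x ::ₘ R).map (AddMonoidHom.snd (ZMod 2) H)) := by
          rw [Multiset.map_cons, crossNum_cons, AddMonoidHom.coe_snd]
      _ ≤ K := hK ⟨_, hmap, rfl⟩
  have hexp := one_div_exponent_le x.2
  rw [crossNum_cons, crossNum_cons, addOrderOf_of_fst_eq_one hodd hx,
    addOrderOf_of_fst_eq_one hodd rfl, addOrderOf_zero]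
  push_cast
  rw [← one_div_mul_one_div, ← one_div_mul_one_div]
  linarith

theorem add_half_sub_mem_upperBounds_WSet (hodd : Odd (AddMonoid.exponent H)) {K : ℚ}
    (hK : K ∈ upperBounds (WSet H))
    (hdiv : ∑ d ∈ (AddMonoid.exponent H).divisors, (1 : ℚ) / d
      ≤ 2 + 1 / (AddMonoid.exponent H : ℚ)) :
    K + 1 / 2 - 1 / (2 * AddMonoid.exponent H) ∈ upperBounds (WSet (ZMod 2 × H)) := by
  rintro _ ⟨S, hS, rfl⟩
  obtain ⟨S', hS', hle, hnodup⟩ := exists_isMinZeroSum_nodup_map_addOrderOf hodd hS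
  refine hle.trans ?_
  rw [← Multiset.filter_add_not (fun x => x.1 = 1) S'] at hS' ⊢
  set E := S'.filter fun x => x.1 = 1
  set O := S'.filter fun x => ¬ x.1 = 1
  have hE : ∀ x ∈ E, x.1 = 1 := fun x hx => (Multiset.mem_filter.mp hx).2
  have hO : ∀ x ∈ O, x.1 = 0 := fun x hx =>
    (zmod_two_eq_zero_or_eq_one x.1).resolve_right (Multiset.mem_filter.mp hx).2
  by_cases hone : (1, 0) ∈ E
  · exact crossNum_le_of_mem_one_zero hodd hK hS' (Multiset.mem_add.mpr (.inl hone))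
  have hexp : 1 / (AddMonoid.exponent H : ℚ) ≤ 1 := by
    simpa using one_div_exponent_le (0 : H)
  rw [← one_div_mul_one_div]
  rcases eq_or_ne E 0 with hE0 | hE0
  · have hO' : crossNum (E + O) ≤ K :=
      hK (crossNum_mem_WSet_of_fst_eq_zero hS' (by rwa [hE0, zero_add]))
    linarith
  · have hO' := one_div_exponent_add_crossNum_le hK hS' hE0 hO
    have hE' := crossNum_le_of_nodup_map_addOrderOf hodd hE hone hnodup
    rw [crossNum_add]
    linarith

theorem exponent_zmod_two_prod (hodd : Odd (AddMonoid.exponent H)) :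
    AddMonoid.exponent (ZMod 2 × H) = 2 * AddMonoid.exponent H := by
  rw [AddMonoid.exponent_prod, ZMod.exponent]
  exact (Nat.coprime_two_left.mpr hodd).lcm_eq_mul

end ZModTwo

theorem stmt10 (H : Type*) [AddCommGroup H] [Fintype H]
    (hodd : Odd (Fintype.card H))
    (s : ℕ) (q : Fin s → ℕ) (hq : ∀ i, IsPrimePow (q i))
    (e : H ≃+ ∀ i, ZMod (q i))
    (hKH : IsGreatest (WSet H)
      (1 / (AddMonoid.exponent H : ℚ) + ∑ i, ((q i : ℚ) - 1) / (q i : ℚ)))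
    (hdiv : ∑ d ∈ (AddMonoid.exponent H).divisors, (1 : ℚ) / (d : ℚ) < 2) :
    IsGreatest (WSet (ZMod 2 × H))
      (1 / (AddMonoid.exponent (ZMod 2 × H) : ℚ) +
        ((1 : ℚ) / 2 + ∑ i, ((q i : ℚ) - 1) / (q i : ℚ))) := by
  have hexp : Odd (AddMonoid.exponent H) :=
    hodd.of_dvd_nat (Nat.card_eq_fintype_card (α := H) ▸ AddGroup.exponent_dvd_nat_card)
  constructor
  · have hq' : ∀ o : Option (Fin s), o.elim 2 q ≠ 0 :=
      Option.forall.mpr ⟨two_ne_zero, fun i => (hq i).ne_zero⟩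
    convert one_div_exponent_add_sum_mem_WSet hq' (zmodTwoProdEquivPi e) using 2
    rw [Fintype.sum_option]
    norm_num
  · have hdiv' := hdiv.le.trans (le_add_of_nonneg_right
      (by positivity : (0 : ℚ) ≤ 1 / AddMonoid.exponent H))
    convert add_half_sub_mem_upperBounds_WSet hexp hKH.2 hdiv' using 1
    rw [exponent_zmod_two_prod hexp, Nat.cast_mul, Nat.cast_two, ← one_div_mul_one_div]
    ring
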